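/- Let 0<p<1 and let (x_n)_{n∈ℕ} together with (x_n*)_{n∈ℕ} be a quasi-greedy basis of ℓ_p. Then the dual basis (x_n*) is equivalent to the unit vector system of c_0: there exist 0<c≤C<∞ such that for every finitely supported real sequence (a_n), c·max_n |a_n| ≤ ‖Σ_n a_n x_n*‖ ≤ C·max_n |a_n|, where ‖x*‖ := sup{|x*(f)| : f ∈ ℓ_p, ‖f‖_p ≤ 1}. -/

import Mathlib

open scoped BigOperators

open scoped BigOperators

/-- For `0 < p < 1`, membership in `ℓ_p`: the sequence `(|f j|^p)_j` is summable. -/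
def MemLpSeq (p : ℝ) (f : ℕ → ℝ) : Prop := Summable fun j => |f j| ^ p

/-- The `p`-norm `‖f‖_p = (∑_j |f j|^p)^(1/p)`. -/
noncomputable def pNorm (p : ℝ) (f : ℕ → ℝ) : ℝ := (∑' j, |f j| ^ p) ^ (1 / p)

/-- `A` is a greedy set for the coefficient sequence `coef`. -/
def GreedySet (coef : ℕ → ℝ) (A : Finset ℕ) : Prop :=
  ∀ n ∈ A, ∀ k ∉ A, |coef k| ≤ |coef n|

/-- `(x_n)` together with bounded linear functionals `(x_n^*)` is a basis of `ℓ_p`. -/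
structure IsLpBasis (p : ℝ) (x : ℕ → ℕ → ℝ) (xs : ℕ → (ℕ → ℝ) → ℝ) : Prop where
  mem : ∀ n, MemLpSeq p (x n)
  map_add : ∀ n f g, MemLpSeq p f → MemLpSeq p g → xs n (f + g) = xs n f + xs n g
  map_smul : ∀ n (c : ℝ) (f : ℕ → ℝ), MemLpSeq p f → xs n (fun j => c * f j) = c * xs n f
  bdd : ∃ b : ℝ, ∀ n f, MemLpSeq p f → |xs n f| ≤ b * pNorm p f
  biorth : ∀ m n, xs m (x n) = if m = n then (1 : ℝ) else 0
  dense : ∀ f, MemLpSeq p f → ∀ ε > 0, ∃ (A : Finset ℕ) (c : ℕ → ℝ),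
    pNorm p (fun j => f j - ∑ n ∈ A, c n * x n j) < ε
  norm_lb : ∃ c > 0, ∀ n, c ≤ pNorm p (x n)
  norm_ub : ∃ C : ℝ, ∀ n, pNorm p (x n) ≤ C

/-- The basis is quasi-greedy: greedy projections are uniformly bounded. -/
def QuasiGreedy (p : ℝ) (x : ℕ → ℕ → ℝ) (xs : ℕ → (ℕ → ℝ) → ℝ) : Prop :=
  ∃ C ≥ (1 : ℝ), ∀ f, MemLpSeq p f → ∀ A : Finset ℕ,
    GreedySet (fun n => xs n f) A →
    pNorm p (fun j => ∑ n ∈ A, xs n f * x n j) ≤ C * pNorm p f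

/-!
For `p < 1` the norm of a functional on `ℓ_p` is the supremum of its values at the unit vectors
`e_j`. The lower estimate comes from testing against `x_n / K`, where `K` bounds all `‖x_n‖`, and
the upper one amounts to bounding `D := sup_j ∑_{n ∈ F} |x_n^*(e_j)|` independently of the finite
set `F`.

Fix `j`, and let `A ⊆ F` consist of indices where `|x_n^*(e_j)|` is comparable to `t`.
Quasi-greediness bounds every `∑_{n ∈ A} ± x_n` by a multiple of `1 / t` in norm. By Khintchine's
inequality so is the square function `(∑_{n ∈ A} |x_n|^2)^{1/2}`; being pointwise `≲ |A|^{1/2}`, it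
has `ℓ_1`-norm `≲ |A|^{(1-p)/2} t^{-p}`. The square function of the `x_n^*(e_i)` is `≲ D^{1/2}` for
every `i`, so Cauchy–Schwarz in the trace `|A| = ∑_{n ∈ A} x_n^*(x_n)`, together with `t |A| ≤ D`,
gives `t |A| ≲ t^{(1-p)/2} D^{1-p/2}`. Summing over geometrically decreasing `t` yields
`D ≤ C D^{1-p/2}` with `C` independent of `F`, whence `D ≤ C^{2/p}`.
-/

section Khintchine

/-- The sum of `b` over `A` with sign `+` on `B` and sign `-` on `A \ B`; averaging over `B ⊆ A`
is averaging over all choices of signs. -/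
def signedSum {ι M : Type*} [DecidableEq ι] [AddCommGroup M] (A B : Finset ι) (b : ι → M) : M :=
  ∑ n ∈ B, b n - ∑ n ∈ A \ B, b n

variable {ι : Type*} [DecidableEq ι] {A : Finset ι}

theorem sum_powerset_insert_signedSum {M N : Type*} [AddCommGroup M] [AddCommMonoid N]
    {a : ι} (ha : a ∉ A) (b : ι → M) (F : M → N) :
    ∑ B ∈ (insert a A).powerset, F (signedSum (insert a A) B b) =
      ∑ B ∈ A.powerset, (F (signedSum A B b - b a) + F (signedSum A B b + b a)) := by
  rw [Finset.sum_powerset_insert ha, ← Finset.sum_add_distrib]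
  refine Finset.sum_congr rfl fun B hB => ?_
  have haB : a ∉ B := fun h => ha (Finset.mem_powerset.1 hB h)
  have hminus : signedSum (insert a A) B b = signedSum A B b - b a := by
    rw [signedSum, signedSum, Finset.insert_sdiff_of_notMem _ haB,
      Finset.sum_insert (fun h => ha (Finset.mem_sdiff.1 h).1)]
    abel
  have hplus : signedSum (insert a A) (insert a B) b = signedSum A B b + b a := by
    rw [signedSum, signedSum, Finset.insert_sdiff_insert, Finset.sdiff_insert_of_notMem ha,
      Finset.sum_insert haB]
    abel
  rw [hminus, hplus]

theorem sum_powerset_signedSum_sq {R : Type*} [CommRing R] (A : Finset ι) (b : ι → R) :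
    ∑ B ∈ A.powerset, signedSum A B b ^ 2 = 2 ^ A.card * ∑ n ∈ A, b n ^ 2 := by
  induction A using Finset.induction_on with
  | empty => simp [signedSum]
  | insert a A ha ih =>
    have parallelogram (u : R) : (u - b a) ^ 2 + (u + b a) ^ 2 = 2 * u ^ 2 + 2 * b a ^ 2 := by ring
    rw [sum_powerset_insert_signedSum ha b (· ^ 2), Finset.sum_insert ha,
      Finset.card_insert_of_notMem ha]
    simp_rw [parallelogram]
    rw [Finset.sum_add_distrib, ← Finset.mul_sum, ih, Finset.sum_const, Finset.card_powerset,
      nsmul_eq_mul]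
    push_cast
    ring

theorem sum_powerset_signedSum_pow_four_le {R : Type*} [CommRing R] [LinearOrder R]
    [IsStrictOrderedRing R] (A : Finset ι) (b : ι → R) :
    ∑ B ∈ A.powerset, signedSum A B b ^ 4 ≤ 2 ^ A.card * (3 * (∑ n ∈ A, b n ^ 2) ^ 2) := by
  induction A using Finset.induction_on with
  | empty => simp [signedSum]
  | insert a A ha ih =>
    have expand (u : R) : (u - b a) ^ 4 + (u + b a) ^ 4 =
        2 * u ^ 4 + 12 * b a ^ 2 * u ^ 2 + 2 * b a ^ 4 := by ring
    rw [sum_powerset_insert_signedSum ha b (· ^ 4), Finset.sum_insert ha,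
      Finset.card_insert_of_notMem ha]
    simp_rw [expand]
    rw [Finset.sum_add_distrib, Finset.sum_add_distrib, ← Finset.mul_sum, ← Finset.mul_sum,
      sum_powerset_signedSum_sq, Finset.sum_const, Finset.card_powerset, nsmul_eq_mul]
    push_cast
    have : 0 ≤ 2 ^ A.card * b a ^ 4 := by positivity
    rw [pow_succ (2 : R) A.card]
    nlinarith

theorem sq_sub_pow_four_div_four_le_rpow {p u : ℝ} (hp0 : 0 ≤ p) (hp2 : p ≤ 2) (hu : 0 ≤ u) :
    u ^ 2 - u ^ 4 / 4 ≤ u ^ p := by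
  rcases le_total u 1 with h | h
  · have : u ^ 2 ≤ u ^ p := by
      simpa using Real.rpow_le_rpow_of_exponent_ge' hu h hp0 hp2
    have : 0 ≤ u ^ 4 := by positivity
    linarith
  · have : 1 ≤ u ^ p := Real.one_le_rpow h hp0
    nlinarith [sq_nonneg (u ^ 2 - 2)]

theorem rpow_mul_sq_sub_pow_four_le_abs_rpow {p g : ℝ} (hp0 : 0 ≤ p) (hp2 : p ≤ 2) (hg : 0 < g)
    (h : ℝ) : g ^ p * (h ^ 2 / g ^ 2 - h ^ 4 / (4 * g ^ 4)) ≤ |h| ^ p := by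
  have key := sq_sub_pow_four_div_four_le_rpow hp0 hp2 (div_nonneg (abs_nonneg h) hg.le)
  rw [Real.div_rpow (abs_nonneg _) hg.le, le_div_iff₀ (Real.rpow_pos_of_pos hg p), div_pow, div_pow,
    sq_abs, (by decide : Even 4).pow_abs] at key
  refine le_of_eq_of_le ?_ key
  field_simp

/- Khintchine's inequality, lower bound: with `S` the random sign sum and `g² = E S²`, integrate
`S²/g² - S⁴/(4g⁴) ≤ |S/g|^p` and use `E S⁴ ≤ 3g⁴`. -/
theorem rpow_sqrt_sum_sq_le_sum_abs_signedSum_rpow {p : ℝ} (hp0 : 0 < p) (hp2 : p ≤ 2)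
    (A : Finset ι) (b : ι → ℝ) :
    √(∑ n ∈ A, b n ^ 2) ^ p ≤ 4 / 2 ^ A.card * ∑ B ∈ A.powerset, |signedSum A B b| ^ p := by
  have hσ : 0 ≤ ∑ n ∈ A, b n ^ 2 := Finset.sum_nonneg fun _ _ => sq_nonneg _
  set g := √(∑ n ∈ A, b n ^ 2)
  rcases (show 0 ≤ g from Real.sqrt_nonneg _).eq_or_lt with h0 | hg0
  · rw [← h0, Real.zero_rpow hp0.ne']
    positivity
  have hg2 : g ^ 2 = ∑ n ∈ A, b n ^ 2 := Real.sq_sqrt hσ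
  have second : (∑ B ∈ A.powerset, signedSum A B b ^ 2) / g ^ 2 = 2 ^ A.card := by
    rw [sum_powerset_signedSum_sq, ← hg2]
    field_simp
  have fourth : (∑ B ∈ A.powerset, signedSum A B b ^ 4) / (4 * g ^ 4) ≤ 2 ^ A.card * (3 / 4) := by
    rw [div_le_iff₀ (by positivity)]
    refine (sum_powerset_signedSum_pow_four_le A b).trans_eq ?_
    rw [← hg2]
    ring
  have average : g ^ p * (2 ^ A.card / 4) ≤ ∑ B ∈ A.powerset, |signedSum A B b| ^ p :=
    calc g ^ p * (2 ^ A.card / 4)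
        ≤ g ^ p * ((∑ B ∈ A.powerset, signedSum A B b ^ 2) / g ^ 2 -
            (∑ B ∈ A.powerset, signedSum A B b ^ 4) / (4 * g ^ 4)) := by
          gcongr
          linarith
      _ = ∑ B ∈ A.powerset, g ^ p * (signedSum A B b ^ 2 / g ^ 2 -
            signedSum A B b ^ 4 / (4 * g ^ 4)) := by
          rw [← Finset.mul_sum, Finset.sum_sub_distrib, Finset.sum_div, Finset.sum_div]
      _ ≤ _ := Finset.sum_le_sum fun B _ =>
          rpow_mul_sq_sub_pow_four_le_abs_rpow hp0.le hp2 hg0 _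
  calc g ^ p = 4 / 2 ^ A.card * (g ^ p * (2 ^ A.card / 4)) := by field_simp
    _ ≤ _ := by gcongr

end Khintchine

section PSeminorm

/-- `N` is the `p`-th power of a `p`-seminorm on `E`, the main example being `f ↦ ‖f‖ ^ p` on `ℓ_p`
for `0 < p ≤ 1`. Working with the `p`-th power makes the triangle inequality additive. -/
structure IsPSeminormPow {E : Type*} [AddCommGroup E] [Module ℝ E] (p : ℝ) (N : E → ℝ) : Prop where
  add_le : ∀ f g, N (f + g) ≤ N f + N g
  smul_eq : ∀ (c : ℝ) f, N (c • f) = |c| ^ p * N f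

namespace IsPSeminormPow

variable {E ι : Type*} [AddCommGroup E] [Module ℝ E] {p : ℝ} {N : E → ℝ}

theorem neg_eq (hN : IsPSeminormPow p N) (f : E) : N (-f) = N f := by
  simpa using hN.smul_eq (-1) f

theorem sub_le (hN : IsPSeminormPow p N) (f g : E) : N (f - g) ≤ N f + N g := by
  simpa [sub_eq_add_neg, hN.neg_eq] using hN.add_le f (-g)

theorem nonneg (hN : IsPSeminormPow p N) (f : E) : 0 ≤ N f := by
  have h_zero : 0 ≤ N 0 := by simpa using hN.add_le 0 0
  have h_double : N 0 ≤ N f + N f := by simpa using hN.sub_le f f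
  linarith

theorem map_zero (hN : IsPSeminormPow p N) (hp : p ≠ 0) : N 0 = 0 := by
  simpa [Real.zero_rpow hp] using hN.smul_eq 0 0

theorem sum_le (hN : IsPSeminormPow p N) (hp : p ≠ 0) (A : Finset ι) (y : ι → E) :
    N (∑ n ∈ A, y n) ≤ ∑ n ∈ A, N (y n) :=
  Finset.le_sum_of_subadditive N (hN.map_zero hp).le hN.add_le A y

theorem sum_smul_le_sum (hN : IsPSeminormPow p N) (hp : 0 < p) {A : Finset ι} {d : ι → ℝ}
    (hd : ∀ n ∈ A, d n ∈ Set.Icc 0 1) (y : ι → E) :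
    N (∑ n ∈ A, d n • y n) ≤ ∑ n ∈ A, N (y n) := by
  refine (hN.sum_le hp.ne' A _).trans (Finset.sum_le_sum fun n hn => ?_)
  rw [hN.smul_eq, abs_of_nonneg (hd n hn).1]
  exact mul_le_of_le_one_left (hN.nonneg _) (Real.rpow_le_one (hd n hn).1 (hd n hn).2 hp.le)

/- Extracting the first binary digit of the coefficients bounds the supremum `M` of the left-hand
side over all `d` by `2 ^ (-p) * (V + M)`. -/
theorem sum_smul_le_of_forall_subset (hN : IsPSeminormPow p N) (hp : 0 < p) {A : Finset ι}
    {y : ι → E} {V : ℝ} (hV : ∀ B ⊆ A, N (∑ n ∈ B, y n) ≤ V) {d : ι → ℝ}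
    (hd : ∀ n ∈ A, d n ∈ Set.Icc 0 1) :
    N (∑ n ∈ A, d n • y n) ≤ V / (2 ^ p - 1) := by
  classical
  let S : Set ℝ := {r | ∃ d : ι → ℝ, (∀ n ∈ A, d n ∈ Set.Icc 0 1) ∧ r = N (∑ n ∈ A, d n • y n)}
  have hS : BddAbove S := by
    refine ⟨∑ n ∈ A, N (y n), ?_⟩
    rintro _ ⟨d, hd, rfl⟩
    exact hN.sum_smul_le_sum hp hd y
  have digit : ∀ r ∈ S, r ≤ (2 ^ p)⁻¹ * (V + sSup S) := by
    rintro _ ⟨d, hd, rfl⟩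
    let d' : ι → ℝ := fun n => 2 * d n - if 1 / 2 ≤ d n then 1 else 0
    have hd' : ∀ n ∈ A, d' n ∈ Set.Icc 0 1 := fun n hn => by
      obtain ⟨h0, h1⟩ := hd n hn
      simp only [d', Set.mem_Icc]
      split_ifs <;> constructor <;> linarith
    have split : ∑ n ∈ A, d n • y n =
        (2⁻¹ : ℝ) • (∑ n ∈ A with 1 / 2 ≤ d n, y n + ∑ n ∈ A, d' n • y n) := by
      rw [Finset.sum_filter, ← Finset.sum_add_distrib, Finset.smul_sum]
      refine Finset.sum_congr rfl fun n _ => ?_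
      simp only [d']
      split_ifs <;> module
    rw [split, hN.smul_eq, abs_of_pos (by norm_num), Real.inv_rpow (by norm_num)]
    gcongr
    exact (hN.add_le _ _).trans
      (add_le_add (hV _ (Finset.filter_subset _ _)) (le_csSup hS ⟨d', hd', rfl⟩))
  have h2p : (1 : ℝ) < 2 ^ p := Real.one_lt_rpow one_lt_two hp
  have hsup : sSup S ≤ (2 ^ p)⁻¹ * (V + sSup S) := csSup_le ⟨_, d, hd, rfl⟩ digit
  rw [inv_mul_eq_div, le_div_iff₀ (by positivity)] at hsup
  rw [le_div_iff₀ (by linarith)]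
  refine (mul_le_mul_of_nonneg_right (le_csSup hS ⟨d, hd, rfl⟩) (by linarith)).trans ?_
  linarith

theorem sum_le_two_mul_sum_smul (hN : IsPSeminormPow p N) (hp : 0 < p) {A : Finset ι}
    {y : ι → E} {Q δ : ℝ} (hδ0 : 0 < δ) (hδ : 2 * (δ ^ p * Q) ≤ 2 ^ p - 1)
    (hQ : ∀ B ⊆ A, N (∑ n ∈ B, y n) ≤ Q * N (∑ n ∈ A, y n)) {c : ι → ℝ}
    (hc : ∀ n ∈ A, c n ∈ Set.Icc 1 (1 + δ)) :
    N (∑ n ∈ A, y n) ≤ 2 * N (∑ n ∈ A, c n • y n) := by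
  have h2p : (1 : ℝ) < 2 ^ p := Real.one_lt_rpow one_lt_two hp
  let d : ι → ℝ := fun n => (c n - 1) / δ
  have hd : ∀ n ∈ A, d n ∈ Set.Icc 0 1 := fun n hn =>
    ⟨div_nonneg (by linarith [(hc n hn).1]) hδ0.le,
      (div_le_one hδ0).2 (by linarith [(hc n hn).2])⟩
  have perturb : ∑ n ∈ A, y n = ∑ n ∈ A, c n • y n - δ • ∑ n ∈ A, d n • y n := by
    rw [Finset.smul_sum, ← Finset.sum_sub_distrib]
    refine Finset.sum_congr rfl fun n _ => ?_
    rw [smul_smul, mul_div_cancel₀ _ hδ0.ne']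
    module
  have small : N (δ • ∑ n ∈ A, d n • y n) ≤ N (∑ n ∈ A, y n) / 2 := by
    rw [hN.smul_eq, abs_of_pos hδ0]
    calc δ ^ p * N (∑ n ∈ A, d n • y n)
        ≤ δ ^ p * (Q * N (∑ n ∈ A, y n) / (2 ^ p - 1)) := by
          gcongr
          exact hN.sum_smul_le_of_forall_subset hp hQ hd
      _ = 2 * (δ ^ p * Q) / (2 ^ p - 1) * (N (∑ n ∈ A, y n) / 2) := by ring
      _ ≤ 1 * (N (∑ n ∈ A, y n) / 2) := by
          gcongr
          · exact div_nonneg (hN.nonneg _) zero_le_two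
          · exact (div_le_one (by linarith)).2 hδ
      _ = _ := one_mul _
  have triangle := hN.sub_le (∑ n ∈ A, c n • y n) (δ • ∑ n ∈ A, d n • y n)
  rw [← perturb] at triangle
  linarith

end IsPSeminormPow

end PSeminorm

section Lp

open Filter Topology
open scoped ENNReal lp

variable {α ι : Type*} {p : ℝ≥0∞}

theorem le_rpow_one_sub_mul_rpow {q u m : ℝ} (hq0 : 0 ≤ q) (hq1 : q ≤ 1) (hu : 0 ≤ u)
    (hum : u ≤ m) : u ≤ m ^ (1 - q) * u ^ q := by
  have h1q : 0 ≤ 1 - q := by linarith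
  calc u = u ^ (1 - q) * u ^ q := by simp [← Real.rpow_add_of_nonneg hu h1q hq0]
    _ ≤ m ^ (1 - q) * u ^ q := by gcongr

theorem lp_norm_add_rpow_le {E : α → Type*} [∀ i, NormedAddCommGroup (E i)]
    (hp0 : 0 < p.toReal) (hp1 : p.toReal ≤ 1) (f g : lp E p) :
    ‖f + g‖ ^ p.toReal ≤ ‖f‖ ^ p.toReal + ‖g‖ ^ p.toReal := by
  refine hasSum_le (fun i => ?_) (lp.hasSum_norm hp0 (f + g))
    ((lp.hasSum_norm hp0 f).add (lp.hasSum_norm hp0 g))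
  calc ‖(f + g) i‖ ^ p.toReal ≤ (‖f i‖ + ‖g i‖) ^ p.toReal := by
        gcongr
        exact norm_add_le _ _
    _ ≤ _ := Real.rpow_add_le_add_rpow (norm_nonneg _) (norm_nonneg _) hp0.le hp1

theorem isPSeminormPow_lp_norm_rpow (hp0 : 0 < p.toReal) (hp1 : p.toReal ≤ 1) :
    IsPSeminormPow p.toReal (fun f : ℓ^p(α, ℝ) => ‖f‖ ^ p.toReal) where
  add_le := lp_norm_add_rpow_le hp0 hp1
  smul_eq c f := by
    rw [lp.norm_const_smul (ENNReal.toReal_pos_iff.1 hp0).1.ne', Real.norm_eq_abs,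
      Real.mul_rpow (abs_nonneg c) (lp.norm_nonneg' f)]

theorem lp_norm_apply_le_rpow_mul_rpow {E : α → Type*} [∀ i, NormedAddCommGroup (E i)]
    (hp0 : 0 < p.toReal) (hp1 : p.toReal ≤ 1) (f : lp E p) (j : α) :
    ‖f j‖ ≤ ‖f‖ ^ (1 - p.toReal) * ‖f j‖ ^ p.toReal :=
  le_rpow_one_sub_mul_rpow hp0.le hp1 (norm_nonneg _)
    (lp.norm_apply_le_norm (ENNReal.toReal_pos_iff.1 hp0).1.ne' f j)

theorem lp_summable_norm {E : α → Type*} [∀ i, NormedAddCommGroup (E i)]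
    (hp0 : 0 < p.toReal) (hp1 : p.toReal ≤ 1) (f : lp E p) : Summable fun j => ‖f j‖ :=
  ((lp.hasSum_norm hp0 f).summable.mul_left _).of_nonneg_of_le (fun _ => norm_nonneg _)
    (lp_norm_apply_le_rpow_mul_rpow hp0 hp1 f)

theorem lp_tsum_norm_le_norm {E : α → Type*} [∀ i, NormedAddCommGroup (E i)]
    (hp0 : 0 < p.toReal) (hp1 : p.toReal ≤ 1) (f : lp E p) : ∑' j, ‖f j‖ ≤ ‖f‖ := by
  have h1p : 0 ≤ 1 - p.toReal := by linarith
  calc ∑' j, ‖f j‖ ≤ ‖f‖ ^ (1 - p.toReal) * ‖f‖ ^ p.toReal :=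
        hasSum_le (lp_norm_apply_le_rpow_mul_rpow hp0 hp1 f)
          (lp_summable_norm hp0 hp1 f).hasSum ((lp.hasSum_norm hp0 f).mul_left _)
    _ = ‖f‖ := by simp [← Real.rpow_add_of_nonneg (lp.norm_nonneg' f) h1p hp0.le]

theorem lp_tendsto_norm_sub_sum_single [DecidableEq α] {E : α → Type*}
    [∀ i, NormedAddCommGroup (E i)] (hp0 : 0 < p.toReal) (f : lp E p) :
    Tendsto (fun s : Finset α => ‖f - ∑ j ∈ s, lp.single p j (f j)‖) atTop (𝓝 0) := by
  have hpow : Tendsto (fun s : Finset α => ‖f - ∑ j ∈ s, lp.single p j (f j)‖ ^ p.toReal)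
      atTop (𝓝 0) := by
    simp_rw [lp.norm_compl_sum_single hp0]
    simpa using (lp.hasSum_norm hp0 f : Tendsto _ _ _).const_sub (‖f‖ ^ p.toReal)
  have hroot := hpow.rpow_const (Or.inr (inv_pos.2 hp0).le)
  rw [Real.zero_rpow (inv_pos.2 hp0).ne'] at hroot
  simpa only [Real.rpow_rpow_inv (lp.norm_nonneg' _) hp0.ne'] using hroot

theorem lp_hasSum_mul_single [DecidableEq α] (hp0 : 0 < p.toReal) {φ : ℓ^p(α, ℝ) →ₗ[ℝ] ℝ} {b : ℝ}
    (hφ : ∀ f, |φ f| ≤ b * ‖f‖) (f : ℓ^p(α, ℝ)) :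
    HasSum (fun j => f j * φ (lp.single p j 1)) (φ f) := by
  have remainder (s : Finset α) :
      φ f - ∑ j ∈ s, f j * φ (lp.single p j 1) = φ (f - ∑ j ∈ s, lp.single p j (f j)) := by
    have single (j : α) : (lp.single p j (f j) : ℓ^p(α, ℝ)) = f j • lp.single p j 1 := by
      rw [← lp.single_smul, smul_eq_mul, mul_one]
    simp only [map_sub, map_sum, single, map_smul, smul_eq_mul]
  have hlim : Tendsto (fun s : Finset α => φ f - ∑ j ∈ s, f j * φ (lp.single p j 1)) atTop
      (𝓝 0) := by
    refine squeeze_zero_norm (fun s => ?_)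
      (by simpa using (lp_tendsto_norm_sub_sum_single hp0 f).const_mul b)
    rw [remainder]
    exact hφ _
  simpa [HasSum] using hlim.const_sub (φ f)

theorem lp_abs_apply_single_le [DecidableEq α] (hp : 0 < p) {φ : ℓ^p(α, ℝ) →ₗ[ℝ] ℝ} {b : ℝ}
    (hφ : ∀ f, |φ f| ≤ b * ‖f‖) (j : α) : |φ (lp.single p j 1)| ≤ b := by
  simpa [lp.norm_single hp] using hφ (lp.single p j 1)

theorem lp_abs_apply_le_of_abs_apply_single_le [DecidableEq α] (hp0 : 0 < p.toReal)
    (hp1 : p.toReal ≤ 1) {φ : ℓ^p(α, ℝ) →ₗ[ℝ] ℝ} {b D : ℝ} (hφ : ∀ f, |φ f| ≤ b * ‖f‖)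
    (hD0 : 0 ≤ D) (hD : ∀ j, |φ (lp.single p j 1)| ≤ D) (f : ℓ^p(α, ℝ)) : |φ f| ≤ D * ‖f‖ := by
  have hsum := (lp_summable_norm hp0 hp1 f).mul_left D
  rw [← (lp_hasSum_mul_single hp0 hφ f).tsum_eq]
  calc |∑' j, f j * φ (lp.single p j 1)| ≤ ∑' j, D * ‖f j‖ :=
        tsum_of_norm_bounded (f := fun j => f j * φ (lp.single p j 1)) hsum.hasSum fun j => by
          rw [norm_mul, mul_comm]
          exact mul_le_mul_of_nonneg_right (hD j) (norm_nonneg _)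
    _ ≤ D * ‖f‖ := by
        rw [tsum_mul_left]
        gcongr
        exact lp_tsum_norm_le_norm hp0 hp1 f

variable [DecidableEq ι] {A : Finset ι} {y : ι → ℓ^p(α, ℝ)} {R : ℝ}

theorem lp_sum_rpow_sqrt_sum_sq_le (hp0 : 0 < p.toReal) (hp2 : p.toReal ≤ 2)
    (hR : ∀ B ⊆ A, ‖signedSum A B y‖ ^ p.toReal ≤ R) (s : Finset α) :
    ∑ j ∈ s, √(∑ n ∈ A, y n j ^ 2) ^ p.toReal ≤ 4 * R := by
  have coord (B : Finset ι) (j : α) : signedSum A B (fun n => y n j) = signedSum A B y j := by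
    simp only [signedSum, lp.coeFn_sub, lp.coeFn_sum, Pi.sub_apply, Finset.sum_apply]
  calc ∑ j ∈ s, √(∑ n ∈ A, y n j ^ 2) ^ p.toReal
      ≤ ∑ j ∈ s, 4 / 2 ^ A.card * ∑ B ∈ A.powerset, |signedSum A B y j| ^ p.toReal :=
        Finset.sum_le_sum fun j _ => by
          simpa only [coord] using
            rpow_sqrt_sum_sq_le_sum_abs_signedSum_rpow hp0 hp2 A fun n => y n j
    _ = 4 / 2 ^ A.card * ∑ B ∈ A.powerset, ∑ j ∈ s, |signedSum A B y j| ^ p.toReal := by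
        rw [← Finset.mul_sum, Finset.sum_comm]
    _ ≤ 4 / 2 ^ A.card * ∑ _B ∈ A.powerset, R := by
        gcongr with _ hB
        exact (lp.sum_rpow_le_norm_rpow hp0 _ s).trans (hR _ (Finset.mem_powerset.1 hB))
    _ = 4 * R := by
        rw [Finset.sum_const, Finset.card_powerset, nsmul_eq_mul]
        push_cast
        field_simp

theorem lp_sum_sqrt_sum_sq_le {K : ℝ} (hp0 : 0 < p.toReal) (hp1 : p.toReal ≤ 1)
    (hK : ∀ n ∈ A, ‖y n‖ ≤ K) (hR : ∀ B ⊆ A, ‖signedSum A B y‖ ^ p.toReal ≤ R) (s : Finset α) :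
    ∑ j ∈ s, √(∑ n ∈ A, y n j ^ 2) ≤ √(A.card * K ^ 2) ^ (1 - p.toReal) * (4 * R) := by
  have pointwise (j : α) : √(∑ n ∈ A, y n j ^ 2) ≤ √(A.card * K ^ 2) := by
    rw [← nsmul_eq_mul]
    refine Real.sqrt_le_sqrt (Finset.sum_le_card_nsmul _ _ _ fun n hn => ?_)
    exact sq_le_sq.2 ((lp.norm_apply_le_norm (ENNReal.toReal_pos_iff.1 hp0).1.ne' (y n) j).trans
      ((hK n hn).trans (le_abs_self K)))
  calc ∑ j ∈ s, √(∑ n ∈ A, y n j ^ 2)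
      ≤ ∑ j ∈ s, √(A.card * K ^ 2) ^ (1 - p.toReal) * √(∑ n ∈ A, y n j ^ 2) ^ p.toReal :=
        Finset.sum_le_sum fun j _ =>
          le_rpow_one_sub_mul_rpow hp0.le hp1 (Real.sqrt_nonneg _) (pointwise j)
    _ ≤ _ := by
        rw [← Finset.mul_sum]
        gcongr
        exact lp_sum_rpow_sqrt_sum_sq_le hp0 (hp1.trans one_le_two) hR s

theorem lp_sum_apply_le [DecidableEq α] {K w b : ℝ} (hp0 : 0 < p.toReal) (hp1 : p.toReal ≤ 1)
    {φ : ι → ℓ^p(α, ℝ) →ₗ[ℝ] ℝ} (hφ : ∀ n ∈ A, ∀ f, |φ n f| ≤ b * ‖f‖) (hw0 : 0 ≤ w)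
    (hw : ∀ j, √(∑ n ∈ A, φ n (lp.single p j 1) ^ 2) ≤ w)
    (hK : ∀ n ∈ A, ‖y n‖ ≤ K) (hR : ∀ B ⊆ A, ‖signedSum A B y‖ ^ p.toReal ≤ R) :
    ∑ n ∈ A, φ n (y n) ≤ √(A.card * K ^ 2) ^ (1 - p.toReal) * (4 * R) * w := by
  have hsum : HasSum (fun j => ∑ n ∈ A, y n j * φ n (lp.single p j 1)) (∑ n ∈ A, φ n (y n)) :=
    hasSum_sum fun n hn => lp_hasSum_mul_single hp0 (hφ n hn) (y n)
  refine le_of_tendsto' hsum fun s => ?_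
  calc ∑ j ∈ s, ∑ n ∈ A, y n j * φ n (lp.single p j 1)
      ≤ ∑ j ∈ s, √(∑ n ∈ A, y n j ^ 2) * w := by
        gcongr with j
        exact (Real.sum_mul_le_sqrt_mul_sqrt A _ _).trans
          (mul_le_mul_of_nonneg_left (hw j) (Real.sqrt_nonneg _))
    _ ≤ _ := by
        rw [← Finset.sum_mul]
        gcongr
        exact lp_sum_sqrt_sum_sq_le hp0 hp1 hK hR s

end Lp

section QuasiGreedy

open SignType (sign)

variable {E : Type*} [AddCommGroup E] [Module ℝ E] {x : ℕ → E} {φ : ℕ → E →ₗ[ℝ] ℝ}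

theorem apply_sum_smul_of_biorthogonal (h : ∀ m n, φ m (x n) = if m = n then 1 else 0)
    (A : Finset ℕ) (c : ℕ → ℝ) (m : ℕ) :
    φ m (∑ n ∈ A, c n • x n) = if m ∈ A then c m else 0 := by
  simp [h]

theorem finite_setOf_lt_abs_of_biorthogonal (h : ∀ m n, φ m (x n) = if m = n then 1 else 0)
    {ν : E → ℝ} (hν : ∀ f, 0 ≤ ν f) {b : ℝ} (hb : ∀ n f, |φ n f| ≤ b * ν f) {f : E}
    (hf : ∀ ε > 0, ∃ (A : Finset ℕ) (c : ℕ → ℝ), ν (f - ∑ n ∈ A, c n • x n) < ε)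
    {t : ℝ} (ht : 0 < t) : {n | t < |φ n f|}.Finite := by
  obtain ⟨A, c, hA⟩ := hf (t / (|b| + 1)) (by positivity)
  refine A.finite_toSet.subset fun n hn => ?_
  by_contra hnA
  have tail : φ n (f - ∑ n ∈ A, c n • x n) = φ n f := by
    rw [map_sub, apply_sum_smul_of_biorthogonal h, if_neg (by simpa using hnA), sub_zero]
  have small : |φ n f| ≤ t := by
    rw [← tail]
    calc |φ n (f - ∑ n ∈ A, c n • x n)| ≤ b * ν (f - ∑ n ∈ A, c n • x n) := hb n _
      _ ≤ (|b| + 1) * ν (f - ∑ n ∈ A, c n • x n) :=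
          mul_le_mul_of_nonneg_right (by linarith [le_abs_self b]) (hν _)
      _ ≤ t := by
          rw [lt_div_iff₀' (by positivity)] at hA
          exact hA.le
  exact small.not_gt hn

theorem abs_sign_eq_one {r : ℝ} (hr : r ≠ 0) : |(sign r : ℝ)| = 1 := by
  rcases hr.lt_or_gt with hneg | hpos
  · simp [sign_neg hneg]
  · simp [sign_pos hpos]

/-- A biorthogonal system whose greedy projections are bounded by `Q` with respect to `N`, and
whose coefficient functionals tend to zero pointwise. These are the only properties of a
quasi-greedy basis used outside `ℓ_p`; `N` is meant to be the `p`-th power of a `p`-norm. -/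
structure IsQuasiGreedySystem (N : E → ℝ) (Q : ℝ) (x : ℕ → E) (φ : ℕ → E →ₗ[ℝ] ℝ) : Prop where
  biorth : ∀ m n, φ m (x n) = if m = n then 1 else 0
  finite_setOf_lt : ∀ f t, 0 < t → {n | t < |φ n f|}.Finite
  greedy_le : ∀ f A, GreedySet (fun n => φ n f) A → N (∑ n ∈ A, φ n f • x n) ≤ Q * N f

namespace IsQuasiGreedySystem

variable {N : E → ℝ} {Q p δ t : ℝ}

theorem sum_subset_le (h : IsQuasiGreedySystem N Q x φ) {A B : Finset ℕ} (hBA : B ⊆ A)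
    {ε : ℕ → ℝ} (hε : ∀ n ∈ A, |ε n| = 1) :
    N (∑ n ∈ B, ε n • x n) ≤ Q * N (∑ n ∈ A, ε n • x n) := by
  have coef := apply_sum_smul_of_biorthogonal h.biorth A ε
  have greedy : GreedySet (fun n => φ n (∑ n ∈ A, ε n • x n)) B := fun n hn k _ => by
    simp only [coef, if_pos (hBA hn), hε n (hBA hn)]
    split_ifs with hk
    · exact (hε k hk).le
    · simp
  have proj : ∑ n ∈ B, φ n (∑ n ∈ A, ε n • x n) • x n = ∑ n ∈ B, ε n • x n :=
    Finset.sum_congr rfl fun n hn => by rw [coef, if_pos (hBA hn)]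
  exact proj ▸ h.greedy_le _ B greedy

theorem sum_superlevel_le (h : IsQuasiGreedySystem N Q x φ) (f : E) {t : ℝ} (ht : 0 < t) :
    N (∑ n ∈ (h.finite_setOf_lt f t ht).toFinset, φ n f • x n) ≤ Q * N f :=
  h.greedy_le f _ fun n hn k hk => by
    simp only [Set.Finite.mem_toFinset, Set.mem_ofPred_eq] at hn hk
    linarith

theorem sum_layer_le (h : IsQuasiGreedySystem N Q x φ) (hN : IsPSeminormPow p N) {f : E}
    {s t : ℝ} (hs : 0 < s) (hst : s ≤ t) {L : Finset ℕ}
    (hL : ∀ n, n ∈ L ↔ s < |φ n f| ∧ |φ n f| ≤ t) :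
    N (∑ n ∈ L, φ n f • x n) ≤ 2 * Q * N f := by
  have ht := hs.trans_le hst
  have split : L = (h.finite_setOf_lt f s hs).toFinset \ (h.finite_setOf_lt f t ht).toFinset := by
    ext n
    simp [hL]
  have mono : (h.finite_setOf_lt f t ht).toFinset ⊆ (h.finite_setOf_lt f s hs).toFinset :=
    Set.Finite.toFinset_subset_toFinset.2 fun n hn => hst.trans_lt hn
  rw [split, Finset.sum_sdiff_eq_sub mono]
  linarith [hN.sub_le (∑ n ∈ (h.finite_setOf_lt f s hs).toFinset, φ n f • x n)
    (∑ n ∈ (h.finite_setOf_lt f t ht).toFinset, φ n f • x n),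
    h.sum_superlevel_le f hs, h.sum_superlevel_le f ht]

theorem sum_sign_smul_le (h : IsQuasiGreedySystem N Q x φ) (hN : IsPSeminormPow p N) (hp : 0 < p)
    (hQ : 0 ≤ Q) (hδ0 : 0 < δ) (hδ : 2 * (δ ^ p * Q) ≤ 2 ^ p - 1) {f : E} (ht : 0 < t)
    {B : Finset ℕ} (hB : ∀ n ∈ B, t < |φ n f| ∧ |φ n f| ≤ (1 + δ) * t) :
    N (∑ n ∈ B, (sign (φ n f) : ℝ) • x n) ≤ 4 * Q ^ 2 * (t⁻¹ ^ p * N f) := by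
  let L := (h.finite_setOf_lt f t ht).toFinset.filter fun n => |φ n f| ≤ (1 + δ) * t
  have hL : ∀ n, n ∈ L ↔ t < |φ n f| ∧ |φ n f| ≤ (1 + δ) * t := by simp [L]
  have hBL : B ⊆ L := fun n hn => (hL n).2 (hB n hn)
  have unimodular : ∀ n ∈ L, |(sign (φ n f) : ℝ)| = 1 := fun n hn =>
    abs_sign_eq_one (abs_pos.1 (ht.trans ((hL n).1 hn).1))
  have rescale : ∑ n ∈ L, (|φ n f| / t) • (sign (φ n f) : ℝ) • x n =
      t⁻¹ • ∑ n ∈ L, φ n f • x n := by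
    rw [Finset.smul_sum]
    refine Finset.sum_congr rfl fun n _ => ?_
    rw [smul_smul, smul_smul, div_mul_eq_mul_div, abs_mul_sign, div_eq_inv_mul]
  have flatten := hN.sum_le_two_mul_sum_smul hp hδ0 hδ
    (fun B' hB' => h.sum_subset_le hB' unimodular) (c := fun n => |φ n f| / t) fun n hn =>
      ⟨(one_le_div ht).2 ((hL n).1 hn).1.le, (div_le_iff₀ ht).2 ((hL n).1 hn).2⟩
  rw [rescale, hN.smul_eq, abs_of_pos (inv_pos.2 ht)] at flatten
  calc N (∑ n ∈ B, (sign (φ n f) : ℝ) • x n)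
      ≤ Q * N (∑ n ∈ L, (sign (φ n f) : ℝ) • x n) := h.sum_subset_le hBL unimodular
    _ ≤ Q * (2 * (t⁻¹ ^ p * (2 * Q * N f))) := by
        refine mul_le_mul_of_nonneg_left (flatten.trans ?_) hQ
        gcongr
        exact h.sum_layer_le hN ht (le_mul_of_one_le_left ht.le (by linarith)) hL
    _ = _ := by ring

theorem signedSum_sign_smul_le (h : IsQuasiGreedySystem N Q x φ) (hN : IsPSeminormPow p N)
    (hp : 0 < p) (hQ : 0 ≤ Q) (hδ0 : 0 < δ) (hδ : 2 * (δ ^ p * Q) ≤ 2 ^ p - 1) {f : E}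
    (ht : 0 < t) {A B : Finset ℕ} (hA : ∀ n ∈ A, t < |φ n f| ∧ |φ n f| ≤ (1 + δ) * t)
    (hBA : B ⊆ A) :
    N (signedSum A B fun n => (sign (φ n f) : ℝ) • x n) ≤ 8 * Q ^ 2 * (t⁻¹ ^ p * N f) := by
  refine (hN.sub_le _ _).trans ?_
  have bound {B' : Finset ℕ} (hB' : B' ⊆ A) :=
    h.sum_sign_smul_le hN hp hQ hδ0 hδ ht fun n hn => hA n (hB' hn)
  linarith [bound hBA, bound (Finset.sdiff_subset : A \ B ⊆ A)]

end IsQuasiGreedySystem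

end QuasiGreedy

section LayerSums

theorem exists_mul_pow_lt_and_le_mul_pow {a b r : ℝ} (ha : 0 < a) (hab : a ≤ b) (hr0 : 0 < r)
    (hr1 : r < 1) : ∃ k : ℕ, b * r ^ (k + 1) < a ∧ a ≤ b * r ^ k := by
  have hb := ha.trans_le hab
  obtain ⟨k, hk⟩ := exists_nat_pow_near_of_lt_one (div_pos ha hb) ((div_le_one hb).2 hab) hr0 hr1
  exact ⟨k, (lt_div_iff₀' hb).1 hk.1, (div_le_iff₀' hb).1 hk.2⟩

theorem sum_le_of_forall_layer_le {ι : Type*} {F : Finset ι} {a : ι → ℝ} {C b r s : ℝ}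
    (hr0 : 0 < r) (hr1 : r < 1) (hs : 0 < s) (hb0 : 0 ≤ b) (ha0 : ∀ n ∈ F, 0 ≤ a n)
    (hab : ∀ n ∈ F, a n ≤ b)
    (hlayer : ∀ t > 0, ∀ A ⊆ F, (∀ n ∈ A, t < a n ∧ a n ≤ r⁻¹ * t) → ∑ n ∈ A, a n ≤ C * t ^ s) :
    ∑ n ∈ F, a n ≤ C * b ^ s * (1 - r ^ s)⁻¹ := by
  classical
  let P := F.filter fun n => 0 < a n
  have restrict : ∑ n ∈ F, a n = ∑ n ∈ P, a n :=
    (Finset.sum_filter_of_ne fun n hn h0 => (ha0 n hn).lt_of_ne' h0).symm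
  have hC : 0 ≤ C := by simpa using hlayer 1 one_pos ∅ (Finset.empty_subset F)
  have hb {n : ι} (hn : n ∈ P) : 0 < b :=
    (Finset.mem_filter.1 hn).2.trans_le (hab n (Finset.mem_filter.1 hn).1)
  have hexp : ∀ n ∈ P, ∃ k : ℕ, b * r ^ (k + 1) < a n ∧ a n ≤ b * r ^ k := fun n hn =>
    exists_mul_pow_lt_and_le_mul_pow (Finset.mem_filter.1 hn).2 (hab n (Finset.mem_filter.1 hn).1)
      hr0 hr1
  choose! k hk using hexp
  have layer (m : ℕ) (hm : m ∈ P.image k) :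
      ∑ n ∈ P with k n = m, a n ≤ C * b ^ s * (r ^ s) ^ m := by
    obtain ⟨n₀, hn₀, -⟩ := Finset.mem_image.1 hm
    have hb := hb hn₀
    have key := hlayer (b * r ^ (m + 1)) (by positivity) (P.filter fun n => k n = m)
      ((Finset.filter_subset _ _).trans (Finset.filter_subset _ _)) fun n hn => by
        obtain ⟨hnP, rfl⟩ := Finset.mem_filter.1 hn
        refine ⟨(hk n hnP).1, (hk n hnP).2.trans_eq ?_⟩
        field_simp
        ring
    calc ∑ n ∈ P with k n = m, a n ≤ C * (b * r ^ (m + 1)) ^ s := key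
      _ ≤ C * (b * r ^ m) ^ s := by
          gcongr C * (b * ?_) ^ s
          exact pow_le_pow_of_le_one hr0.le hr1.le m.le_succ
      _ = C * b ^ s * (r ^ s) ^ m := by
          rw [Real.mul_rpow hb.le (by positivity), Real.rpow_pow_comm hr0.le, mul_assoc]
  have hrs : r ^ s < 1 := Real.rpow_lt_one hr0.le hr1 hs
  rw [restrict, ← Finset.sum_fiberwise_of_maps_to fun n hn => Finset.mem_image_of_mem k hn,
    ← tsum_geometric_of_lt_one (by positivity) hrs]
  refine (Finset.sum_le_sum layer).trans ?_
  rw [← Finset.mul_sum]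
  gcongr
  exact (summable_geometric_of_lt_one (by positivity) hrs).sum_le_tsum _ fun _ _ => by positivity

theorem le_rpow_inv_of_forall_le_mul_rpow {ι : Type*} {S : ι → ℝ} {C θ : ℝ} (hS0 : ∀ i, 0 ≤ S i)
    (hS : BddAbove (Set.range S)) (hC : 0 ≤ C) (hθ : 0 < θ)
    (himprove : ∀ D, (∀ i, S i ≤ D) → ∀ i, S i ≤ C * D ^ (1 - θ)) (i : ι) : S i ≤ C ^ θ⁻¹ := by
  have hi : S i ≤ ⨆ j, S j := le_ciSup hS i
  refine hi.trans ?_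
  rcases ((hS0 i).trans hi).eq_or_lt with h0 | hpos
  · rw [← h0]
    positivity
  have : Nonempty ι := ⟨i⟩
  have key : ⨆ j, S j ≤ C * (⨆ j, S j) ^ (1 - θ) := ciSup_le (himprove _ fun j => le_ciSup hS j)
  rw [Real.rpow_sub hpos, Real.rpow_one, ← mul_div_assoc, mul_comm, mul_div_assoc,
    le_mul_iff_one_le_right hpos, one_le_div (by positivity)] at key
  exact (Real.le_rpow_inv_iff_of_pos hpos.le hC hθ).2 key

theorem exists_pos_two_mul_rpow_mul_le {q Q : ℝ} (hq : 0 < q) (hQ : 0 < Q) :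
    ∃ δ > 0, 2 * (δ ^ q * Q) ≤ 2 ^ q - 1 := by
  have h2q : 0 < (2 : ℝ) ^ q - 1 := sub_pos.2 (Real.one_lt_rpow one_lt_two hq)
  refine ⟨((2 ^ q - 1) / (2 * Q)) ^ q⁻¹, by positivity, ?_⟩
  rw [Real.rpow_inv_rpow (by positivity) hq.ne']
  apply le_of_eq
  field_simp

theorem mul_sqrt_rpow_mul_inv_rpow_le {q t c D K : ℝ} (hq : q ≤ 1) (ht : 0 < t) (hc : 0 ≤ c)
    (hD : t * c ≤ D) :
    t * (√(c * K ^ 2) ^ (1 - q) * t⁻¹ ^ q) ≤ √(D * K ^ 2) ^ (1 - q) * t ^ ((1 - q) / 2) := by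
  have size : t * √(c * K ^ 2) ≤ √t * √(D * K ^ 2) := by
    rw [← Real.sqrt_mul ht.le]
    refine Real.le_sqrt_of_sq_le ?_
    rw [mul_pow, Real.sq_sqrt (by positivity)]
    nlinarith [mul_le_mul_of_nonneg_left hD (mul_nonneg ht.le (sq_nonneg K))]
  have t_power : t * t⁻¹ ^ q = t ^ (1 - q) := by
    rw [Real.inv_rpow ht.le, Real.rpow_sub ht, Real.rpow_one, div_eq_mul_inv]
  have sqrt_power : √t ^ (1 - q) = t ^ ((1 - q) / 2) := by
    rw [Real.sqrt_eq_rpow, ← Real.rpow_mul ht.le]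
    congr 1
    ring
  calc t * (√(c * K ^ 2) ^ (1 - q) * t⁻¹ ^ q) = (t * √(c * K ^ 2)) ^ (1 - q) := by
        rw [Real.mul_rpow ht.le (Real.sqrt_nonneg _), ← t_power]
        ring
    _ ≤ (√t * √(D * K ^ 2)) ^ (1 - q) :=
        Real.rpow_le_rpow (by positivity) size (sub_nonneg.2 hq)
    _ = _ := by
        rw [Real.mul_rpow (Real.sqrt_nonneg _) (Real.sqrt_nonneg _), sqrt_power, mul_comm]

theorem sqrt_mul_rpow_mul_sqrt_mul {q b c D : ℝ} (hq : q ≤ 1) (hb : 0 ≤ b) (hD : 0 ≤ D) :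
    √(D * c) ^ (1 - q) * √(b * D) = √c ^ (1 - q) * √b * D ^ (1 - q / 2) := by
  have D_power : D ^ (1 - q / 2) = √D ^ (1 - q) * √D := by
    rw [Real.sqrt_eq_rpow, ← Real.rpow_mul hD,
      ← Real.rpow_add_of_nonneg hD (by linarith) (by norm_num)]
    congr 1
    ring
  rw [D_power, Real.sqrt_mul hD, Real.sqrt_mul hb,
    Real.mul_rpow (Real.sqrt_nonneg _) (Real.sqrt_nonneg _)]
  ring

end LayerSums

section QuasiGreedyLp

open SignType (sign)
open scoped ENNReal lp

variable {α : Type*} {p : ℝ≥0∞} {x : ℕ → ℓ^p(α, ℝ)} {φ : ℕ → ℓ^p(α, ℝ) →ₗ[ℝ] ℝ}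
  {Q K b D δ t : ℝ}

theorem IsQuasiGreedySystem.card_layer_le [DecidableEq α]
    (h : IsQuasiGreedySystem (fun f => ‖f‖ ^ p.toReal) Q x φ) (hp0 : 0 < p.toReal)
    (hp1 : p.toReal ≤ 1) (hQ : 0 ≤ Q) (hx : ∀ n, ‖x n‖ ≤ K) (hφ : ∀ n f, |φ n f| ≤ b * ‖f‖)
    (hδ0 : 0 < δ) (hδ : 2 * (δ ^ p.toReal * Q) ≤ 2 ^ p.toReal - 1) {A : Finset ℕ}
    (hD : ∀ j, ∑ n ∈ A, |φ n (lp.single p j 1)| ≤ D) {i : α} (ht : 0 < t)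
    (hA : ∀ n ∈ A, t < |φ n (lp.single p i 1)| ∧ |φ n (lp.single p i 1)| ≤ (1 + δ) * t) :
    A.card ≤ √(A.card * K ^ 2) ^ (1 - p.toReal) * (4 * (8 * Q ^ 2 * t⁻¹ ^ p.toReal)) *
      √(b * D) := by
  set e : α → ℓ^p(α, ℝ) := fun j => lp.single p j 1
  have hpos : 0 < p := (ENNReal.toReal_pos_iff.1 hp0).1
  let σ : ℕ → ℝ := fun n => sign (φ n (e i))
  have hσ : ∀ n ∈ A, |σ n| = 1 := fun n hn => abs_sign_eq_one (abs_pos.1 (ht.trans (hA n hn).1))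
  have trace : ∑ n ∈ A, (σ n • φ n) (σ n • x n) = A.card := by
    rw [Finset.card_eq_sum_ones, Nat.cast_sum]
    refine Finset.sum_congr rfl fun n hn => ?_
    simp [h.biorth, ← abs_mul_abs_self (σ n), hσ n hn]
  refine trace.ge.trans (lp_sum_apply_le (y := fun n => σ n • x n) (b := b) hp0 hp1
    (fun n hn f => ?_) (Real.sqrt_nonneg _) (fun j => Real.sqrt_le_sqrt ?_) (fun n hn => ?_)
    fun B hB => ?_)
  · simpa [abs_mul, hσ n hn] using hφ n f
  · have hb (n : ℕ) : |φ n (e j)| ≤ b := lp_abs_apply_single_le hpos (hφ n) j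
    calc ∑ n ∈ A, (σ n • φ n) (e j) ^ 2 ≤ ∑ n ∈ A, b * |φ n (e j)| := by
          refine Finset.sum_le_sum fun n hn => ?_
          rw [LinearMap.smul_apply, smul_eq_mul, mul_pow, ← sq_abs (σ n), hσ n hn, one_pow,
            one_mul, ← sq_abs, sq]
          exact mul_le_mul_of_nonneg_right (hb n) (abs_nonneg _)
      _ ≤ b * D := by
          rw [← Finset.mul_sum]
          exact mul_le_mul_of_nonneg_left (hD j) ((abs_nonneg _).trans (hb 0))
  · rw [lp.norm_const_smul hpos.ne', Real.norm_eq_abs, hσ n hn, one_mul]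
    exact hx n
  · have := h.signedSum_sign_smul_le (isPSeminormPow_lp_norm_rpow hp0 hp1) hp0 hQ hδ0 hδ ht hA hB
    simpa [e, lp.norm_single hpos] using this

theorem IsQuasiGreedySystem.sum_layer_abs_apply_single_le [DecidableEq α]
    (h : IsQuasiGreedySystem (fun f => ‖f‖ ^ p.toReal) Q x φ) (hp0 : 0 < p.toReal)
    (hp1 : p.toReal ≤ 1) (hQ : 0 ≤ Q) (hx : ∀ n, ‖x n‖ ≤ K) (hφ : ∀ n f, |φ n f| ≤ b * ‖f‖)
    (hδ0 : 0 < δ) (hδ : 2 * (δ ^ p.toReal * Q) ≤ 2 ^ p.toReal - 1) {A : Finset ℕ}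
    (hD : ∀ j, ∑ n ∈ A, |φ n (lp.single p j 1)| ≤ D) {i : α} (ht : 0 < t)
    (hA : ∀ n ∈ A, t < |φ n (lp.single p i 1)| ∧ |φ n (lp.single p i 1)| ≤ (1 + δ) * t) :
    ∑ n ∈ A, |φ n (lp.single p i 1)| ≤
      (1 + δ) * (32 * Q ^ 2 * √(D * K ^ 2) ^ (1 - p.toReal) * √(b * D)) *
        t ^ ((1 - p.toReal) / 2) := by
  have upper : ∑ n ∈ A, |φ n (lp.single p i 1)| ≤ (1 + δ) * (t * A.card) := by
    refine (Finset.sum_le_card_nsmul A _ _ fun n hn => (hA n hn).2).trans_eq ?_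
    rw [nsmul_eq_mul]
    ring
  have lower : t * A.card ≤ D := by
    refine le_trans ?_ (hD i)
    rw [mul_comm, ← nsmul_eq_mul]
    exact Finset.card_nsmul_le_sum A _ _ fun n hn => (hA n hn).1.le
  refine upper.trans ?_
  rw [mul_assoc (1 + δ)]
  refine mul_le_mul_of_nonneg_left ?_ (by linarith)
  calc t * A.card ≤ t * (√(A.card * K ^ 2) ^ (1 - p.toReal) *
        (4 * (8 * Q ^ 2 * t⁻¹ ^ p.toReal)) * √(b * D)) := by
        gcongr
        exact h.card_layer_le hp0 hp1 hQ hx hφ hδ0 hδ hD ht hA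
    _ = 32 * Q ^ 2 * (t * (√(A.card * K ^ 2) ^ (1 - p.toReal) * t⁻¹ ^ p.toReal)) * √(b * D) := by
        ring
    _ ≤ 32 * Q ^ 2 * (√(D * K ^ 2) ^ (1 - p.toReal) * t ^ ((1 - p.toReal) / 2)) * √(b * D) := by
        gcongr 32 * Q ^ 2 * ?_ * √(b * D)
        exact mul_sqrt_rpow_mul_inv_rpow_le hp1 ht A.card.cast_nonneg lower
    _ = _ := by ring

theorem IsQuasiGreedySystem.exists_sum_abs_apply_single_le_mul_rpow [DecidableEq α]
    (h : IsQuasiGreedySystem (fun f => ‖f‖ ^ p.toReal) Q x φ) (hp0 : 0 < p.toReal)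
    (hp1 : p.toReal < 1) (hQ : 0 < Q) (hx : ∀ n, ‖x n‖ ≤ K) (hφ : ∀ n f, |φ n f| ≤ b * ‖f‖) :
    ∃ C, 0 ≤ C ∧ ∀ (A : Finset ℕ) (D : ℝ), (∀ i, ∑ n ∈ A, |φ n (lp.single p i 1)| ≤ D) →
      ∀ i, ∑ n ∈ A, |φ n (lp.single p i 1)| ≤ C * D ^ (1 - p.toReal / 2) := by
  obtain ⟨δ, hδ0, hδ⟩ := exists_pos_two_mul_rpow_mul_le hp0 hQ
  let s : ℝ := (1 - p.toReal) / 2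
  have hs : 0 < s := half_pos (by linarith)
  let G : ℝ := (1 - (1 + δ)⁻¹ ^ s)⁻¹
  have hG : 0 ≤ G := inv_nonneg.2 (sub_nonneg.2
    (Real.rpow_le_one (by positivity) (inv_le_one_of_one_le₀ (by linarith)) hs.le))
  have hb : 0 ≤ b := by
    by_contra! hb
    have : (1 : ℝ) ≤ b * ‖x 0‖ := by simpa [h.biorth] using hφ 0 (x 0)
    nlinarith [lp.norm_nonneg' (x 0)]
  refine ⟨(1 + δ) * (32 * Q ^ 2) * √(K ^ 2) ^ (1 - p.toReal) * √b * b ^ s * G,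
    by positivity, fun A D hD i => ?_⟩
  have hD0 : 0 ≤ D := (Finset.sum_nonneg fun _ _ => abs_nonneg _).trans (hD i)
  have layers := sum_le_of_forall_layer_le (inv_pos.2 (by linarith : 0 < 1 + δ))
    (inv_lt_one_of_one_lt₀ (by linarith)) hs hb (fun n _ => abs_nonneg (φ n (lp.single p i 1)))
    (fun n _ => lp_abs_apply_single_le (ENNReal.toReal_pos_iff.1 hp0).1 (hφ n) i)
    fun t ht B hBA hB =>
      h.sum_layer_abs_apply_single_le hp0 hp1.le hQ.le hx hφ hδ0 hδ (D := D) (fun j =>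
        (Finset.sum_le_sum_of_subset_of_nonneg hBA fun _ _ _ => abs_nonneg _).trans (hD j)) ht
        (by simpa using hB)
  refine layers.trans_eq ?_
  rw [mul_assoc (32 * Q ^ 2), sqrt_mul_rpow_mul_sqrt_mul hp1.le hb hD0]
  ring

theorem IsQuasiGreedySystem.exists_sum_abs_apply_single_le [DecidableEq α]
    (h : IsQuasiGreedySystem (fun f => ‖f‖ ^ p.toReal) Q x φ) (hp0 : 0 < p.toReal)
    (hp1 : p.toReal < 1) (hQ : 0 < Q) (hx : ∀ n, ‖x n‖ ≤ K) (hφ : ∀ n f, |φ n f| ≤ b * ‖f‖) :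
    ∃ D, 0 ≤ D ∧ ∀ (A : Finset ℕ) (i : α), ∑ n ∈ A, |φ n (lp.single p i 1)| ≤ D := by
  obtain ⟨C, hC0, hC⟩ := h.exists_sum_abs_apply_single_le_mul_rpow hp0 hp1 hQ hx hφ
  refine ⟨C ^ (p.toReal / 2)⁻¹, by positivity, fun A =>
    le_rpow_inv_of_forall_le_mul_rpow (fun i => Finset.sum_nonneg fun n _ => abs_nonneg _)
      ⟨A.card • b, ?_⟩ hC0 (half_pos hp0) (hC A)⟩
  rintro _ ⟨i, rfl⟩
  exact Finset.sum_le_card_nsmul A _ b fun n _ =>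
    lp_abs_apply_single_le (ENNReal.toReal_pos_iff.1 hp0).1 (hφ n) i

theorem IsQuasiGreedySystem.exists_abs_sum_mul_apply_le
    (h : IsQuasiGreedySystem (fun f => ‖f‖ ^ p.toReal) Q x φ) (hp0 : 0 < p.toReal)
    (hp1 : p.toReal < 1) (hQ : 0 < Q) (hx : ∀ n, ‖x n‖ ≤ K) (hφ : ∀ n f, |φ n f| ≤ b * ‖f‖) :
    ∃ D, 0 ≤ D ∧ ∀ (A : Finset ℕ) (a : ℕ → ℝ) (M : ℝ), 0 ≤ M → (∀ n ∈ A, |a n| ≤ M) →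
      ∀ f, |∑ n ∈ A, a n * φ n f| ≤ D * M * ‖f‖ := by
  classical
  obtain ⟨D, hD0, hD⟩ := h.exists_sum_abs_apply_single_le hp0 hp1 hQ hx hφ
  refine ⟨D, hD0, fun A a M hM0 hM => ?_⟩
  have triangle : ∀ f, |∑ n ∈ A, a n * φ n f| ≤ M * ∑ n ∈ A, |φ n f| := fun f => by
    rw [Finset.mul_sum]
    refine (Finset.abs_sum_le_sum_abs _ _).trans (Finset.sum_le_sum fun n hn => ?_)
    rw [abs_mul]
    exact mul_le_mul_of_nonneg_right (hM n hn) (abs_nonneg _)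
  have hψ : ∀ f, (∑ n ∈ A, a n • φ n) f = ∑ n ∈ A, a n * φ n f := by simp
  have bounded : ∀ f, |(∑ n ∈ A, a n • φ n) f| ≤ M * (A.card * b) * ‖f‖ := fun f => by
    rw [hψ, mul_assoc, mul_assoc, ← nsmul_eq_mul]
    exact (triangle f).trans <| mul_le_mul_of_nonneg_left
      (Finset.sum_le_card_nsmul A _ _ fun n _ => hφ n f) hM0
  intro f
  rw [← hψ]
  refine lp_abs_apply_le_of_abs_apply_single_le hp0 hp1.le bounded (by positivity) (fun j => ?_) f
  rw [hψ, mul_comm]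
  exact (triangle _).trans (mul_le_mul_of_nonneg_left (hD A j) hM0)

end QuasiGreedyLp

section LpBasis

open scoped ENNReal lp

variable {p : ℝ} {x : ℕ → ℕ → ℝ} {xs : ℕ → (ℕ → ℝ) → ℝ}

theorem toReal_ofReal_pos (hp : 0 < p) : 0 < (ENNReal.ofReal p).toReal :=
  (ENNReal.toReal_ofReal hp.le).symm ▸ hp

theorem memLpSeq_iff_memℓp (hp : 0 < p) {f : ℕ → ℝ} :
    MemLpSeq p f ↔ Memℓp f (ENNReal.ofReal p) := by
  simp only [memℓp_gen_iff (toReal_ofReal_pos hp),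
    ENNReal.toReal_ofReal hp.le, Real.norm_eq_abs, MemLpSeq]

theorem pNorm_coe_lp (hp : 0 < p) (f : ℓ^(ENNReal.ofReal p)(ℕ, ℝ)) : pNorm p f = ‖f‖ := by
  simp only [lp.norm_eq_tsum_rpow (toReal_ofReal_pos hp),
    ENNReal.toReal_ofReal hp.le, Real.norm_eq_abs, pNorm]

theorem memLpSeq_coe_lp (hp : 0 < p) (f : ℓ^(ENNReal.ofReal p)(ℕ, ℝ)) : MemLpSeq p f :=
  (memLpSeq_iff_memℓp hp).2 (lp.memℓp f)

namespace IsLpBasis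

/-- The basis vector `x n` as an element of Mathlib's `ℓ^p` space. -/
def vec (h : IsLpBasis p x xs) (hp : 0 < p) (n : ℕ) : ℓ^(ENNReal.ofReal p)(ℕ, ℝ) :=
  ⟨x n, (memLpSeq_iff_memℓp hp).1 (h.mem n)⟩

/-- The coordinate functional `xs n` as a linear map on Mathlib's `ℓ^p` space; this forgets its
values outside `ℓ_p`, about which `IsLpBasis` says nothing. -/
def coord (h : IsLpBasis p x xs) (hp : 0 < p) (n : ℕ) : ℓ^(ENNReal.ofReal p)(ℕ, ℝ) →ₗ[ℝ] ℝ where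
  toFun f := xs n f
  map_add' f g := h.map_add n f g (memLpSeq_coe_lp hp f) (memLpSeq_coe_lp hp g)
  map_smul' c f := h.map_smul n c f (memLpSeq_coe_lp hp f)

theorem exists_norm_vec_le (h : IsLpBasis p x xs) (hp : 0 < p) :
    ∃ K, 0 < K ∧ ∀ n, ‖h.vec hp n‖ ≤ K := by
  obtain ⟨c, hc, hlb⟩ := h.norm_lb
  obtain ⟨K, hK⟩ := h.norm_ub
  exact ⟨K, hc.trans_le ((hlb 0).trans (hK 0)), fun n => (pNorm_coe_lp hp _).symm.trans_le (hK n)⟩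

theorem exists_abs_coord_le (h : IsLpBasis p x xs) (hp : 0 < p) :
    ∃ b, ∀ n f, |h.coord hp n f| ≤ b * ‖f‖ := by
  obtain ⟨b, hb⟩ := h.bdd
  exact ⟨b, fun n f => pNorm_coe_lp hp f ▸ hb n f (memLpSeq_coe_lp hp f)⟩

theorem coe_sum_smul_vec (h : IsLpBasis p x xs) (hp : 0 < p) (A : Finset ℕ) (c : ℕ → ℝ) :
    ⇑(∑ n ∈ A, c n • h.vec hp n) = fun j => ∑ n ∈ A, c n * x n j := by
  ext j
  rw [lp.coeFn_sum, Finset.sum_apply]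
  rfl

theorem finite_setOf_lt_abs_coord (h : IsLpBasis p x xs) (hp : 0 < p)
    (f : ℓ^(ENNReal.ofReal p)(ℕ, ℝ)) {t : ℝ} (ht : 0 < t) :
    {n | t < |h.coord hp n f|}.Finite := by
  obtain ⟨b, hb⟩ := h.exists_abs_coord_le hp
  refine finite_setOf_lt_abs_of_biorthogonal (x := h.vec hp) h.biorth lp.norm_nonneg' hb
    (fun ε hε => ?_) ht
  obtain ⟨A, c, hA⟩ := h.dense f (memLpSeq_coe_lp hp f) ε hε
  refine ⟨A, c, ?_⟩
  rwa [← pNorm_coe_lp hp, lp.coeFn_sub, coe_sum_smul_vec]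

theorem exists_isQuasiGreedySystem (h : IsLpBasis p x xs) (hqg : QuasiGreedy p x xs)
    (hp : 0 < p) : ∃ Q, 0 < Q ∧ IsQuasiGreedySystem
      (fun f => ‖f‖ ^ (ENNReal.ofReal p).toReal) Q (h.vec hp) (h.coord hp) := by
  obtain ⟨C, hC1, hC⟩ := hqg
  have hC0 : 0 < C := by linarith
  refine ⟨C ^ p, Real.rpow_pos_of_pos hC0 p, h.biorth,
    fun f t => h.finite_setOf_lt_abs_coord hp f, fun f A hA => ?_⟩
  have projection : ‖∑ n ∈ A, h.coord hp n f • h.vec hp n‖ ≤ C * ‖f‖ := by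
    rw [← pNorm_coe_lp hp, ← pNorm_coe_lp hp, coe_sum_smul_vec]
    exact hC f (memLpSeq_coe_lp hp f) A hA
  rw [ENNReal.toReal_ofReal hp.le, ← Real.mul_rpow hC0.le (lp.norm_nonneg' f)]
  exact Real.rpow_le_rpow (lp.norm_nonneg' _) projection hp.le

theorem exists_abs_sum_mul_le (h : IsLpBasis p x xs) (hqg : QuasiGreedy p x xs) (hp0 : 0 < p)
    (hp1 : p < 1) : ∃ D, 0 ≤ D ∧ ∀ (s : Finset ℕ) (a : ℕ → ℝ) (M : ℝ), 0 ≤ M →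
      (∀ n ∈ s, |a n| ≤ M) → ∀ f, MemLpSeq p f → pNorm p f ≤ 1 →
        |∑ n ∈ s, a n * xs n f| ≤ D * M := by
  obtain ⟨Q, hQ, hsys⟩ := h.exists_isQuasiGreedySystem hqg hp0
  obtain ⟨K, -, hK⟩ := h.exists_norm_vec_le hp0
  obtain ⟨b, hb⟩ := h.exists_abs_coord_le hp0
  have hq : (ENNReal.ofReal p).toReal = p := ENNReal.toReal_ofReal hp0.le
  obtain ⟨D, hD0, hD⟩ :=
    hsys.exists_abs_sum_mul_apply_le (hq.symm ▸ hp0) (hq.symm ▸ hp1) hQ hK hb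
  refine ⟨D, hD0, fun s a M hM0 hM f hf hf1 => ?_⟩
  let F : ℓ^(ENNReal.ofReal p)(ℕ, ℝ) := ⟨f, (memLpSeq_iff_memℓp hp0).1 hf⟩
  have hF : ‖F‖ ≤ 1 := (pNorm_coe_lp hp0 F).symm.trans_le hf1
  exact (hD s a M hM0 hM F).trans (mul_le_of_le_one_right (by positivity) hF)

theorem exists_forall_exists_inv_mul_abs_eq (h : IsLpBasis p x xs) (hp : 0 < p) :
    ∃ K, 0 < K ∧ ∀ (s : Finset ℕ) (a : ℕ → ℝ), ∀ n ∈ s, ∃ f, MemLpSeq p f ∧ pNorm p f ≤ 1 ∧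
      K⁻¹ * |a n| = |∑ m ∈ s, a m * xs m f| := by
  obtain ⟨K, hK0, hK⟩ := h.exists_norm_vec_le hp
  refine ⟨K, hK0, fun s a n hn => ?_⟩
  let F := K⁻¹ • h.vec hp n
  have hF : ‖F‖ ≤ 1 := by
    rw [lp.norm_const_smul (by simpa using hp), Real.norm_eq_abs,
      abs_of_pos (inv_pos.2 hK0), inv_mul_le_iff₀ hK0, mul_one]
    exact hK n
  have coef : ∀ m, xs m F = if m = n then K⁻¹ else 0 := fun m => by
    change h.coord hp m F = _
    rw [_root_.map_smul, show h.coord hp m (h.vec hp n) = _ from h.biorth m n]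
    simp
  refine ⟨F, memLpSeq_coe_lp hp F, (pNorm_coe_lp hp F).trans_le hF, ?_⟩
  simp [coef, hn, abs_mul, abs_of_pos hK0, mul_comm]

end IsLpBasis

end LpBasis

theorem finite_range_of_forall_notMem_eq_zero {ι M : Type*} [Zero M] {s : Finset ι} {a : ι → M}
    (ha : ∀ n ∉ s, a n = 0) : (Set.range a).Finite :=
  (Finsupp.onFinset s a fun n hn => by_contra fun hns => hn (ha n hns)).finite_range

/-- For a quasi-greedy basis of `ℓ_p`, `0<p<1`, the dual basis `(x_n^*)` is
equivalent to the unit vector system of `c₀`: for every finitely supported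
scalar sequence `a`, the dual-space norm of `∑ a_n x_n^*` is comparable to
`max_n |a_n|`. -/
theorem stmt7 (p : ℝ) (hp0 : 0 < p) (hp1 : p < 1)
    (x : ℕ → ℕ → ℝ) (xs : ℕ → (ℕ → ℝ) → ℝ)
    (hbasis : IsLpBasis p x xs) (hqg : QuasiGreedy p x xs) :
    ∃ c C : ℝ, 0 < c ∧ c ≤ C ∧
      ∀ (s : Finset ℕ) (a : ℕ → ℝ), (∀ n ∉ s, a n = 0) →
        c * (⨆ n, |a n|) ≤
          sSup {r : ℝ | ∃ f : ℕ → ℝ, MemLpSeq p f ∧ pNorm p f ≤ 1 ∧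
            r = |∑ n ∈ s, a n * xs n f|} ∧
        sSup {r : ℝ | ∃ f : ℕ → ℝ, MemLpSeq p f ∧ pNorm p f ≤ 1 ∧
            r = |∑ n ∈ s, a n * xs n f|} ≤ C * (⨆ n, |a n|) := by
  obtain ⟨D, hD0, upper⟩ := hbasis.exists_abs_sum_mul_le hqg hp0 hp1
  obtain ⟨K, hK0, lower⟩ := hbasis.exists_forall_exists_inv_mul_abs_eq hp0
  refine ⟨K⁻¹, K⁻¹ + D, inv_pos.2 hK0, by linarith, fun s a ha => ?_⟩
  have hbdd : BddAbove (Set.range fun n => |a n|) :=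
    (finite_range_of_forall_notMem_eq_zero (s := s) fun n hn => by simp [ha n hn]).bddAbove
  have hM0 : 0 ≤ ⨆ n, |a n| := Real.iSup_nonneg fun n => abs_nonneg (a n)
  have hupper : ∀ r ∈ {r : ℝ | ∃ f : ℕ → ℝ, MemLpSeq p f ∧ pNorm p f ≤ 1 ∧
      r = |∑ n ∈ s, a n * xs n f|}, r ≤ (K⁻¹ + D) * ⨆ n, |a n| := by
    rintro _ ⟨f, hf, hf1, rfl⟩
    have := upper s a _ hM0 (fun n _ => le_ciSup hbdd n) f hf hf1
    nlinarith [inv_pos.2 hK0]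
  refine ⟨?_, Real.sSup_le hupper (by positivity)⟩
  rw [Real.mul_iSup_of_nonneg (inv_pos.2 hK0).le]
  refine ciSup_le fun n => ?_
  by_cases hn : n ∈ s
  · exact le_csSup ⟨_, hupper⟩ (lower s a n hn)
  · rw [ha n hn, abs_zero, mul_zero]
    exact Real.sSup_nonneg fun r ⟨_, _, _, hr⟩ => hr ▸ abs_nonneg _
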